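/- For every nonnegative integer n, the number sT(3n+2) of partition pairs (π₁,π₂) ∈ 𝒮𝒯 with |π₁|+|π₂| = 3n+2 is divisible by 3. -/

import Mathlib

open scoped BigOperators

noncomputable section

/-- A partition is a finite multiset of positive integers. -/
def IsPartition (π : Multiset ℕ) : Prop := ∀ x ∈ π, 0 < x

/-- The smallest part of a partition, with the convention `s(∅) = ∞`. -/
def sPart (π : Multiset ℕ) : ℕ∞ := (π.map (fun x => (x : ℕ∞))).inf

/-- The largest part of a partition, with the convention `ℓ(∅) = 0`. -/
def lPart (π : Multiset ℕ) : ℕ := π.sup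

/-- Membership in the set 𝒮𝒯 of partition pairs: π₁ is nonempty,
`s(π₁) ≤ s(π₂)`, and `ℓ(π₂) < 2·s(π₁)`. -/
def InST (p : Multiset ℕ × Multiset ℕ) : Prop :=
  IsPartition p.1 ∧ IsPartition p.2 ∧ p.1 ≠ 0 ∧
    sPart p.1 ≤ sPart p.2 ∧ (lPart p.2 : ℕ∞) < 2 * sPart p.1

/-- `sT n` is the number of pairs `(π₁, π₂) ∈ 𝒮𝒯` with `|π₁| + |π₂| = n`. -/
def sT (n : ℕ) : ℕ :=
  {p : Multiset ℕ × Multiset ℕ | InST p ∧ p.1.sum + p.2.sum = n}.ncard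

open PowerSeries

abbrev PS := PowerSeries (ZMod 3)

/-- `(q;q)_k` over `ZMod 3`. -/
def qP (k : ℕ) : PS := ∏ i ∈ Finset.range k, (1 - (X : PS) ^ (i + 1))

def qR (k : ℕ) : PS := (qP k)⁻¹

lemma qP_const (k : ℕ) : constantCoeff (qP k) ≠ 0 := by
  unfold qP
  rw [map_prod]
  apply Finset.prod_ne_zero_iff.mpr
  intro i _
  simp

lemma qP_mul_qR (k : ℕ) : qP k * qR k = 1 := PowerSeries.mul_inv_cancel _ (qP_const k)

lemma qP_succ (k : ℕ) : qP (k + 1) = qP k * (1 - X ^ (k + 1)) := by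
  unfold qP; rw [Finset.prod_range_succ]

lemma qP_zero : qP 0 = 1 := by simp [qP]

lemma qR_zero : qR 0 = 1 := by
  have := qP_mul_qR 0
  rwa [qP_zero, one_mul] at this

lemma qR_eq (k : ℕ) : qR k = (1 - X ^ (k + 1)) * qR (k + 1) := by
  have h1 := qP_mul_qR k
  have h2 := qP_mul_qR (k + 1)
  rw [qP_succ] at h2
  calc qR k = qR k * (qP k * (1 - X ^ (k + 1)) * qR (k + 1)) := by rw [h2, mul_one]
    _ = (qP k * qR k) * ((1 - X ^ (k + 1)) * qR (k + 1)) := by ring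
    _ = _ := by rw [h1, one_mul]

def tri : ℕ → ℕ
  | 0 => 0
  | j + 1 => tri j + (j + 1)

lemma two_tri (j : ℕ) : 2 * tri j = j * (j + 1) := by
  induction j with
  | zero => rfl
  | succ j ih => rw [tri, mul_add, ih]; ring

def cc (m j : ℕ) : PS :=
  if j ≤ m then (-1) ^ j * X ^ tri j * qR (m - j) * qR (m + j + 1) else 0

lemma cc_eq (m j a b : ℕ) (h : m = j + a) (hb : m + j + 1 = b) :
    cc m j = (-1) ^ j * X ^ tri j * qR a * qR b := by
  subst h
  subst hb
  unfold cc
  rw [if_pos (by omega), Nat.add_sub_cancel_left]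

lemma cc_rec (m j : ℕ) :
    (1 - (X : PS) ^ (2 * m + 2)) * (1 - X ^ (2 * m + 3)) * cc (m + 1) (j + 1) =
      (1 + X ^ (2 * m + 2)) * cc m (j + 1) - X ^ (m + 1) * (cc m j + cc m (j + 2)) := by
  rcases lt_trichotomy j m with h | h | h
  · obtain ⟨d, rfl⟩ := Nat.exists_eq_add_of_lt h
    rcases d with _ | d
    · have e1 : cc (j + 0 + 1 + 1) (j + 1) =
          (-1) ^ (j + 1) * X ^ tri (j + 1) * qR 1 * qR (j + j + 4) :=
        cc_eq _ _ _ _ (by omega) (by omega)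
      have e2 : cc (j + 0 + 1) (j + 1) =
          (-1) ^ (j + 1) * X ^ tri (j + 1) * qR 0 * qR (j + j + 3) :=
        cc_eq _ _ _ _ (by omega) (by omega)
      have e3 : cc (j + 0 + 1) j =
          (-1) ^ j * X ^ tri j * qR 1 * qR (j + j + 2) :=
        cc_eq _ _ _ _ (by omega) (by omega)
      have e4 : cc (j + 0 + 1) (j + 2) = 0 := by
        unfold cc
        rw [if_neg (by omega)]
      rw [e1, e2, e3, e4, tri, qR_eq 0, qR_eq (j + j + 2), qR_eq (j + j + 2 + 1)]
      ring
    · have e1 : cc (j + (d + 1) + 1 + 1) (j + 1) =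
          (-1) ^ (j + 1) * X ^ tri (j + 1) * qR (d + 2) * qR (j + j + d + 5) :=
        cc_eq _ _ _ _ (by omega) (by omega)
      have e2 : cc (j + (d + 1) + 1) (j + 1) =
          (-1) ^ (j + 1) * X ^ tri (j + 1) * qR (d + 1) * qR (j + j + d + 4) :=
        cc_eq _ _ _ _ (by omega) (by omega)
      have e3 : cc (j + (d + 1) + 1) j =
          (-1) ^ j * X ^ tri j * qR (d + 2) * qR (j + j + d + 3) :=
        cc_eq _ _ _ _ (by omega) (by omega)
      have e4 : cc (j + (d + 1) + 1) (j + 2) =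
          (-1) ^ (j + 2) * X ^ tri (j + 2) * qR d * qR (j + j + d + 5) :=
        cc_eq _ _ _ _ (by omega) (by omega)
      rw [e1, e2, e3, e4, show tri (j + 2) = tri j + (j + 1) + (j + 2) from rfl,
        show tri (j + 1) = tri j + (j + 1) from rfl, qR_eq d, qR_eq (d + 1), qR_eq (j + j + d + 3),
        qR_eq (j + j + d + 3 + 1)]
      ring
  · subst h
    have e1 : cc (j + 1) (j + 1) =
        (-1) ^ (j + 1) * X ^ tri (j + 1) * qR 0 * qR (j + j + 3) :=
        cc_eq _ _ _ _ (by omega) (by omega)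
    have e2 : cc j (j + 1) = 0 := by
      unfold cc
      rw [if_neg (by omega)]
    have e3 : cc j j =
        (-1) ^ j * X ^ tri j * qR 0 * qR (j + j + 1) :=
        cc_eq _ _ _ _ (by omega) (by omega)
    have e4 : cc j (j + 2) = 0 := by
      unfold cc
      rw [if_neg (by omega)]
    rw [e1, e2, e3, e4, tri, qR_eq (j + j + 1), qR_eq (j + j + 1 + 1)]
    ring
  · have e1 : cc (m + 1) (j + 1) = 0 := by
      unfold cc
      rw [if_neg (by omega)]
    have e2 : cc m (j + 1) = 0 := by
      unfold cc
      rw [if_neg (by omega)]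
    have e3 : cc m j = 0 := by
      unfold cc
      rw [if_neg (by omega)]
    have e4 : cc m (j + 2) = 0 := by
      unfold cc
      rw [if_neg (by omega)]
    rw [e1, e2, e3, e4]
    ring

lemma cc_rec_zero (m : ℕ) :
    (1 - (X : PS) ^ (2 * m + 2)) * (1 - X ^ (2 * m + 3)) * cc (m + 1) 0 =
      (1 + X ^ (2 * m + 2)) * cc m 0 - X ^ (m + 1) * (- cc m 0 + cc m 1) := by
  rcases m with _ | m
  · have e4 : cc 0 1 = 0 := by
      unfold cc
      rw [if_neg (by omega)]
    have e1 : cc (0 + 1) 0 = qR 1 * qR 2 := by simp [cc, tri]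
    have e2 : cc 0 0 = qR 0 * qR 1 := by simp [cc, tri]
    rw [e1, e2, e4, qR_eq 0, qR_eq (0 + 1)]
    ring
  · have e1 : cc (m + 1 + 1) 0 = qR (m + 2) * qR (m + 3) := by simp [cc, tri]
    have e2 : cc (m + 1) 0 = qR (m + 1) * qR (m + 2) := by simp [cc, tri]
    have e4 : cc (m + 1) 1 = - X * qR m * qR (m + 3) := by simp [cc, tri]
    rw [e1, e2, e4, qR_eq m, qR_eq (m + 1), qR_eq (m + 1 + 1)]
    ring

lemma sum_aux (a p x : PS) (c c' : ℕ → PS)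
    (h0 : x * c' 0 = a * c 0 - p * (- c 0 + c 1))
    (h : ∀ j, x * c' (j + 1) = a * c (j + 1) - p * (c j + c (j + 2))) (K : ℕ) :
    x * ∑ j ∈ Finset.range (K + 1), (2 * j + 1 : PS) * c' j =
      (a - 2 * p) * ∑ j ∈ Finset.range (K + 1), (2 * j + 1 : PS) * c j
        - p * ((2 * K + 1) * c (K + 1) - (2 * K + 3) * c K) := by
  induction K with
  | zero =>
    simp only [zero_add, Finset.sum_range_one]
    push_cast
    linear_combination h0
  | succ K ih =>
    rw [Finset.sum_range_succ, Finset.sum_range_succ _ (K + 1)]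
    push_cast
    linear_combination ih + (2 * (K : PS) + 3) * h K

lemma beta (m : ℕ) :
    qP m ^ 2 * qR (2 * m + 1) = ∑ j ∈ Finset.range (m + 1), (2 * j + 1 : PS) * cc m j := by
  induction m with
  | zero =>
    simp [qP_zero, cc, tri, qR_zero]
  | succ m ih =>
    have key := sum_aux (1 + X ^ (2 * m + 2)) (X ^ (m + 1)) 
      ((1 - (X : PS) ^ (2 * m + 2)) * (1 - X ^ (2 * m + 3))) (cc m) (cc (m + 1))
      (cc_rec_zero m) (cc_rec m) (m + 1)
    have e1 : cc m (m + 1 + 1) = 0 := by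
      unfold cc
      rw [if_neg (by omega)]
    have e2 : cc m (m + 1) = 0 := by
      unfold cc
      rw [if_neg (by omega)]
    rw [Finset.sum_range_succ (fun j => (2 * j + 1 : PS) * cc m j) (m + 1), e1, e2, ← ih,
      qR_eq (2 * m + 1), qR_eq (2 * m + 1 + 1)] at key
    have hne : ((1 - (X : PS) ^ (2 * m + 2)) * (1 - X ^ (2 * m + 3))) ≠ 0 := by
      intro h
      have := congrArg constantCoeff h
      simp at this
    apply mul_left_cancel₀ hne
    rw [key, qP_succ]
    have : 2 * (m + 1) + 1 = 2 * m + 1 + 1 + 1 := by ring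
    rw [this]
    ring

def qT (M k : ℕ) : PS := ∑ s ∈ Finset.range (M + 1), X ^ s * qR s * qR (s + k)

lemma qT_rec (M k : ℕ) : qT M k + X ^ (k + 1) * qT M (k + 1) = qR M * qR (M + k + 1) := by
  unfold qT
  induction M with
  | zero =>
    simp only [zero_add, Finset.sum_range_one, qR_zero]
    rw [qR_eq k]; ring
  | succ M ih =>
    rw [Finset.sum_range_succ, Finset.sum_range_succ _ (M + 1)]
    have e : M + 1 + k = M + k + 1 := by ring
    have e' : M + 1 + (k + 1) = M + k + 1 + 1 := by ring
    have e'' : M + 1 + k + 1 = M + k + 1 + 1 := by ring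
    rw [e'', e, e']
    have h1 := qR_eq M
    have h2 := qR_eq (M + k + 1)
    rw [h1] at ih
    rw [h2] at ih ⊢
    linear_combination ih

/-- no coefficients in degrees `≡ 2 mod 3` up to `N` -/
def Good (N : ℕ) (f : PS) : Prop := ∀ k, k ≤ N → k % 3 = 2 → coeff k f = 0

lemma Good.add {N f g} (hf : Good N f) (hg : Good N g) : Good N (f + g) := by
  intro k h1 h2; rw [map_add, hf k h1 h2, hg k h1 h2, add_zero]

lemma Good.sub {N f g} (hf : Good N f) (hg : Good N g) : Good N (f - g) := by
  intro k h1 h2; rw [map_sub, hf k h1 h2, hg k h1 h2, sub_zero]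

lemma Good.sum {N : ℕ} {ι : Type*} (s : Finset ι) (f : ι → PS) (h : ∀ i ∈ s, Good N (f i)) :
    Good N (∑ i ∈ s, f i) := by
  intro k h1 h2; rw [map_sum]; exact Finset.sum_eq_zero fun i hi => h i hi k h1 h2

lemma Good.of_dvd {N : ℕ} {e : ℕ} (f : PS) (h : N < e) (hd : X ^ e ∣ f) : Good N f := by
  intro k h1 _
  exact (X_pow_dvd_iff.mp hd) k (by omega)

lemma Good.xpow {N : ℕ} {e : ℕ} (h : e % 3 ≠ 2) : Good N (X ^ e) := by
  intro k _ h2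
  rw [coeff_X_pow, if_neg]
  rintro rfl; exact h h2

lemma Good.C_mul {N f} (a : ZMod 3) (hf : Good N f) : Good N (C a * f) := by
  intro k h1 h2; rw [coeff_C_mul, hf k h1 h2, mul_zero]

lemma Good.cancel {N : ℕ} (i : ℕ) (f : PS) (h : Good N (f * (1 - X ^ (3 * (i + 1))))) :
    Good N f := by
  intro k
  induction k using Nat.strong_induction_on with
  | _ k ih =>
    intro h1 h2
    have := h k h1 h2
    rw [mul_sub, mul_one, map_sub, coeff_mul_X_pow'] at this
    split_ifs at this with hk
    · rw [ih (k - 3 * (i + 1)) (by omega) (by omega) (by omega)] at this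
      simpa using this
    · simpa using this

lemma qP_cube (k : ℕ) : qP k ^ 3 = ∏ i ∈ Finset.range k, (1 - (X : PS) ^ (3 * (i + 1))) := by
  unfold qP
  rw [← Finset.prod_pow]
  refine Finset.prod_congr rfl fun i _ => ?_
  have h3 : (3 : PS) = 0 := by
    have : (C (3 : ZMod 3) : PS) = C 0 := congrArg _ (by decide)
    rwa [map_ofNat, map_zero] at this
  have e : (1 - (X : PS) ^ (i + 1)) ^ 3 - (1 - X ^ (3 * (i + 1))) =
      3 * (X ^ (2 * (i + 1)) - X ^ (i + 1)) := by ring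
  rw [h3, zero_mul] at e
  exact sub_eq_zero.mp e

lemma Good.cancel_cube {N : ℕ} (k : ℕ) (f : PS) (h : Good N (f * qP k ^ 3)) : Good N f := by
  rw [qP_cube] at h
  induction k with
  | zero => simpa using h
  | succ k ih =>
    rw [Finset.prod_range_succ, ← mul_assoc] at h
    exact ih (Good.cancel _ _ h)

/-- `qP a * qR b ≡ 1` to order `min a b`. -/
lemma qP_qR_of_le (a d : ℕ) : X ^ (a + 1) ∣ qP (a + d) - qP a := by
  induction d with
  | zero => simp
  | succ d ih =>
    have : qP (a + (d + 1)) - qP a = (qP (a + d) - qP a) - X ^ (a + 1) * (X ^ d * qP (a + d)) := by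
      rw [← add_assoc, qP_succ]; ring
    rw [this]
    exact dvd_sub ih (dvd_mul_right _ _)

lemma qP_qR_sub (M a b : ℕ) (ha : M ≤ a) (hb : M ≤ b) : X ^ (M + 1) ∣ qP a * qR b - 1 := by
  obtain ⟨d, rfl⟩ := Nat.exists_eq_add_of_le ha
  obtain ⟨e, rfl⟩ := Nat.exists_eq_add_of_le hb
  have h1 := qP_qR_of_le M d
  have h2 := qP_qR_of_le M e
  have : qP (M + d) * qR (M + e) - 1 = ((qP (M + d) - qP M) - (qP (M + e) - qP M)) * qR (M + e) := by
    have := qP_mul_qR (M + e)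
    linear_combination this
  rw [this]
  exact (dvd_sub h1 h2).mul_right _

lemma good_theta (N M j : ℕ) (hM : M + j + 1 = N) (t : ℕ) : ∀ r E : ℕ, N < E + t →
    2 * E = j * j + 3 * j + r * r + 3 * r + 4 * j * r + 2 →
    Good N (X ^ E * (qP N ^ 2 * qT M (2 * j + 1 + r))) := by
  induction t with
  | zero =>
    intro r E h _
    exact Good.of_dvd (e := E) _ (by omega) (dvd_mul_right _ _)
  | succ t ih =>
    intro r E h hE
    have hr := qT_rec M (2 * j + 1 + r)
    have h1 := qP_qR_sub M N M (by omega) le_rfl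
    have h2 := qP_qR_sub M N (M + (2 * j + 1 + r) + 1) (by omega) (by omega)
    have hk : X ^ (M + 1) ∣ qP N ^ 2 * (qR M * qR (M + (2 * j + 1 + r) + 1)) - 1 := by
      have : qP N ^ 2 * (qR M * qR (M + (2 * j + 1 + r) + 1)) - 1 =
        (qP N * qR M - 1) * (qP N * qR (M + (2 * j + 1 + r) + 1))
          + (qP N * qR (M + (2 * j + 1 + r) + 1) - 1) := by ring
      rw [this]
      exact dvd_add (h1.mul_right _) h2
    have hjE : j + 1 ≤ E := by nlinarith
    have e : X ^ E * (qP N ^ 2 * qT M (2 * j + 1 + r)) =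
        X ^ E + X ^ E * (qP N ^ 2 * (qR M * qR (M + (2 * j + 1 + r) + 1)) - 1)
         - X ^ (E + (2 * j + 1 + r + 1)) * (qP N ^ 2 * qT M (2 * j + 1 + (r + 1))) := by
      rw [← hr, show 2 * j + 1 + (r + 1) = 2 * j + 1 + r + 1 by ring]
      ring
    rw [e]
    refine Good.sub (Good.add (Good.xpow ?_) ?_) (ih (r + 1) _ (by omega) ?_)
    · intro h3
      have hE' := congrArg (· % 3) hE
      have hj : j % 3 = 0 ∨ j % 3 = 1 ∨ j % 3 = 2 := by omega
      have hr3 : r % 3 = 0 ∨ r % 3 = 1 ∨ r % 3 = 2 := by omega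
      rcases hj with hj | hj | hj <;> rcases hr3 with hr3 | hr3 | hr3 <;>
        simp [Nat.add_mod, Nat.mul_mod, hj, hr3, h3] at hE'
    · refine Good.of_dvd (e := E + (M + 1)) _ (by omega) ?_
      rw [pow_add]
      exact mul_dvd_mul_left _ hk
    · linarith [hE]

def Phi (N : ℕ) : PS := ∑ m ∈ Finset.range N, X ^ (m + 1) * (qP m ^ 2 * qR (2 * m + 1) * qR N)

lemma Phi_good (N : ℕ) : Good N (Phi N) := by
  apply Good.cancel_cube N
  have e : Phi N * qP N ^ 3 = ∑ j ∈ Finset.range N, C ((2 * j + 1) * (-1) ^ j : ZMod 3) *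
      (X ^ (tri j + (j + 1)) * (qP N ^ 2 * qT (N - 1 - j) (2 * j + 1 + 0))) := by
    have h1 : Phi N * qP N ^ 3 = ∑ m ∈ Finset.range N, ∑ j ∈ Finset.range (m + 1),
        X ^ (m + 1) * qP N ^ 2 * ((2 * j + 1 : PS) * cc m j) := by
      unfold Phi
      rw [Finset.sum_mul]
      refine Finset.sum_congr rfl fun m _ => ?_
      rw [← Finset.mul_sum, ← beta]
      linear_combination X ^ (m + 1) * qP m ^ 2 * qR (2 * m + 1) * qP N ^ 2 * qP_mul_qR N
    rw [h1]
    rw [Finset.sum_sigma']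
    simp only [qT, Finset.mul_sum]
    rw [Finset.sum_sigma']
    refine Finset.sum_bij' (fun x _ => ⟨x.2, x.1 - x.2⟩) (fun x _ => ⟨x.1 + x.2, x.1⟩) ?_ ?_ ?_ ?_ ?_
    · rintro ⟨m, j⟩ h; simp at h ⊢; omega
    · rintro ⟨m, j⟩ h; simp at h ⊢; omega
    · rintro ⟨m, j⟩ h; simp at h ⊢; omega
    · rintro ⟨m, j⟩ h; simp at h ⊢
    · rintro ⟨m, j⟩ h
      simp at h
      obtain ⟨s, rfl⟩ := Nat.exists_eq_add_of_le (show j ≤ m by omega)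
      simp only [cc, Nat.le_add_right, if_true, Nat.add_sub_cancel_left]
      rw [show j + s + j + 1 = s + (2 * j + 1 + 0) by ring]
      simp only [map_mul, map_add, map_pow, map_neg, map_one, map_natCast, map_ofNat]
      ring
  rw [e]
  refine Good.sum _ _ fun j hj => Good.C_mul _ ?_
  rw [Finset.mem_range] at hj
  apply good_theta N (N - 1 - j) j (by omega) (N + 1)
  · omega
  · have := two_tri j
    nlinarith

def pairSet (s t : Finset ℕ) (n : ℕ) : Set (Multiset ℕ × Multiset ℕ) :=
  {p | (∀ x ∈ p.1, x ∈ s) ∧ (∀ x ∈ p.2, x ∈ t) ∧ p.1.sum + p.2.sum = n}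

lemma le_of_sum (M : Multiset ℕ) (n : ℕ) (hpos : ∀ x ∈ M, 0 < x) (hs : M.sum ≤ n) :
    M ≤ n • (Multiset.range (n + 1)) := by
  rw [Multiset.le_iff_count]
  intro a
  by_cases ha : a ∈ M
  · have h1 : a ≤ n := (Multiset.le_sum_of_mem ha).trans hs
    have hc : M.card ≤ M.sum := by
      have := Multiset.card_nsmul_le_sum (s := M) (a := 1) (fun x hx => hpos x hx)
      simpa using this
    have h2 : M.count a ≤ n := (Multiset.count_le_card a M).trans (hc.trans hs)
    rw [Multiset.count_nsmul]
    have h3 : 1 ≤ (Multiset.range (n + 1)).count a :=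
      Multiset.one_le_count_iff_mem.mpr (Multiset.mem_range.mpr (by omega))
    nlinarith
  · rw [Multiset.count_eq_zero_of_notMem ha]; exact Nat.zero_le _

lemma finite_pairs (n : ℕ) :
    {p : Multiset ℕ × Multiset ℕ | (∀ x ∈ p.1, 0 < x) ∧ (∀ x ∈ p.2, 0 < x) ∧
      p.1.sum + p.2.sum = n}.Finite := by
  refine Set.Finite.subset ((Set.finite_Iic (n • (Multiset.range (n + 1)))).prod
    (Set.finite_Iic (n • (Multiset.range (n + 1))))) ?_
  rintro ⟨a, b⟩ ⟨h1, h2, h3⟩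
  exact ⟨le_of_sum a n h1 (by simp at h3; omega), le_of_sum b n h2 (by simp at h3; omega)⟩

lemma pairSet_finite (s t : Finset ℕ) (hs : ∀ x ∈ s, 0 < x) (ht : ∀ x ∈ t, 0 < x) (n : ℕ) :
    (pairSet s t n).Finite := by
  refine (finite_pairs n).subset ?_
  rintro p ⟨h1, h2, h3⟩
  exact ⟨fun x hx => hs x (h1 x hx), fun x hx => ht x (h2 x hx), h3⟩

def gs (s t : Finset ℕ) : PS := PowerSeries.mk fun n => ((pairSet s t n).ncard : ZMod 3)

lemma gs_swap (s t : Finset ℕ) : gs s t = gs t s := by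
  ext n
  simp only [gs, coeff_mk]
  congr 1
  rw [← Set.ncard_image_of_injective (pairSet s t n) Prod.swap_injective]
  congr 1
  rw [Set.image_swap_eq_preimage_swap]
  ext ⟨a, b⟩
  simp only [pairSet, Set.mem_preimage, Set.mem_ofPred_eq, Prod.swap_prod_mk]
  rw [add_comm]
  tauto

lemma pairSet_insert (a : ℕ) (s t : Finset ℕ) (ha : a ∉ s) (ha0 : 0 < a)
    (hs : ∀ x ∈ s, 0 < x) (ht : ∀ x ∈ t, 0 < x) (n : ℕ) :
    (pairSet (insert a s) t n).ncard = (pairSet s t n).ncard +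
      if a ≤ n then (pairSet (insert a s) t (n - a)).ncard else 0 := by
  have hs' : ∀ x ∈ insert a s, 0 < x := by
    intro x hx
    rcases Finset.mem_insert.mp hx with rfl | hx
    · exact ha0
    · exact hs x hx
  have hf := pairSet_finite (insert a s) t hs' ht n
  have hsplit : pairSet (insert a s) t n = pairSet s t n ∪
      {p ∈ pairSet (insert a s) t n | a ∈ p.1} := by
    ext p
    constructor
    · rintro ⟨h1, h2, h3⟩
      by_cases hp : a ∈ p.1
      · exact Or.inr ⟨⟨h1, h2, h3⟩, hp⟩
      · refine Or.inl ⟨fun x hx => ?_, h2, h3⟩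
        rcases Finset.mem_insert.mp (h1 x hx) with rfl | h
        · exact absurd hx hp
        · exact h
    · rintro (⟨h1, h2, h3⟩ | h)
      · exact ⟨fun x hx => Finset.mem_insert_of_mem (h1 x hx), h2, h3⟩
      · exact h.1
  have hdisj : Disjoint (pairSet s t n) {p ∈ pairSet (insert a s) t n | a ∈ p.1} := by
    rw [Set.disjoint_left]
    rintro p ⟨h1, _, _⟩ ⟨_, h⟩
    exact ha (h1 a h)
  rw [hsplit, Set.ncard_union_eq hdisj (pairSet_finite s t hs ht n) (hf.subset fun p h => h.1)]
  congr 1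
  split_ifs with h
  · have hinj : Function.Injective (fun p : Multiset ℕ × Multiset ℕ => (a ::ₘ p.1, p.2)) := by
      rintro ⟨p, q⟩ ⟨p', q'⟩ h
      simpa using h
    rw [← Set.ncard_image_of_injective (pairSet (insert a s) t (n - a)) hinj]
    congr 1
    ext ⟨p, q⟩
    simp only [pairSet, Set.mem_image, Set.mem_ofPred_eq, Prod.mk.injEq, Prod.exists]
    constructor
    · rintro ⟨⟨h1, h2, h3⟩, h4⟩
      obtain ⟨p', rfl⟩ := Multiset.exists_cons_of_mem h4
      refine ⟨p', q, ⟨fun x hx => h1 x (Multiset.mem_cons_of_mem hx), h2, ?_⟩, rfl, rfl⟩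
      rw [Multiset.sum_cons] at h3
      omega
    · rintro ⟨p', q', ⟨h1, h2, h3⟩, rfl, rfl⟩
      refine ⟨⟨fun x hx => ?_, h2, ?_⟩, Multiset.mem_cons_self _ _⟩
      · rcases Multiset.mem_cons.mp hx with rfl | hx
        · exact Finset.mem_insert_self _ _
        · exact h1 x hx
      · rw [Multiset.sum_cons]; omega
  · have hemp : {p ∈ pairSet (insert a s) t n | a ∈ p.1} = ∅ := by
      rw [Set.eq_empty_iff_forall_notMem]
      rintro ⟨p, q⟩ ⟨⟨h1, h2, h3⟩, h4⟩
      have hle := Multiset.le_sum_of_mem h4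
      simp only at h3 hle
      omega
    rw [hemp, Set.ncard_empty]

lemma gs_insert (a : ℕ) (s t : Finset ℕ) (ha : a ∉ s) (ha0 : 0 < a)
    (hs : ∀ x ∈ s, 0 < x) (ht : ∀ x ∈ t, 0 < x) :
    gs (insert a s) t * (1 - X ^ a) = gs s t := by
  ext n
  rw [mul_sub, mul_one, map_sub, coeff_mul_X_pow']
  simp only [gs, coeff_mk]
  rw [pairSet_insert a s t ha ha0 hs ht n]
  split_ifs <;> simp

lemma gs_empty : gs ∅ ∅ = 1 := by
  ext n
  simp only [gs, coeff_mk, coeff_one]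
  have : pairSet ∅ ∅ n = if n = 0 then {(0, 0)} else ∅ := by
    ext ⟨p, q⟩
    simp only [pairSet, Finset.notMem_empty, Set.mem_ofPred_eq]
    have e : ∀ M : Multiset ℕ, (∀ x ∈ M, False) ↔ M = 0 := fun M =>
      (Multiset.eq_zero_iff_forall_notMem).symm
    rw [e, e]
    split_ifs with h
    · subst h
      simp only [Set.mem_singleton_iff, Prod.mk.injEq]
      constructor
      · tauto
      · rintro ⟨rfl, rfl⟩; simp
    · simp only [Set.mem_empty_iff_false, iff_false]
      rintro ⟨rfl, rfl, h'⟩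
      simp at h'; omega
  rw [this]
  split_ifs <;> simp

lemma gs_left (s t : Finset ℕ) (hs : ∀ x ∈ s, 0 < x) (ht : ∀ x ∈ t, 0 < x) :
    gs s t * ∏ i ∈ s, (1 - (X : PS) ^ i) = gs ∅ t := by
  induction s using Finset.induction_on with
  | empty => simp
  | insert a s ha ih =>
    have hs' : ∀ x ∈ s, 0 < x := fun x hx => hs x (Finset.mem_insert_of_mem hx)
    rw [Finset.prod_insert ha, ← mul_assoc,
      gs_insert a s t ha (hs a (Finset.mem_insert_self _ _)) hs' ht, ih hs']

lemma gs_prod (s t : Finset ℕ) (hs : ∀ x ∈ s, 0 < x) (ht : ∀ x ∈ t, 0 < x) :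
    gs s t * (∏ i ∈ s, (1 - (X : PS) ^ i)) * ∏ i ∈ t, (1 - (X : PS) ^ i) = 1 := by
  rw [gs_left s t hs ht, gs_swap, gs_left t ∅ ht (by simp), gs_empty]

lemma qP_mul_Ico (a b : ℕ) (h : a ≤ b) :
    qP a * ∏ i ∈ Finset.Ico (a + 1) (b + 1), (1 - (X : PS) ^ i) = qP b := by
  induction b, h using Nat.le_induction with
  | base => simp
  | succ b hb ih =>
    rw [Finset.prod_Ico_succ_top (by omega), ← mul_assoc, ih, qP_succ]

lemma gs_eq (m N : ℕ) (h : m < N) :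
    gs (Finset.Ico (m + 1) (N + 1)) (Finset.Ico (m + 1) (2 * m + 1 + 1)) =
      qP m ^ 2 * qR (2 * m + 1) * qR N := by
  have h1 := gs_prod (Finset.Ico (m + 1) (N + 1)) (Finset.Ico (m + 1) (2 * m + 1 + 1))
    (fun x hx => by simp at hx; omega) (fun x hx => by simp at hx; omega)
  have h2 := qP_mul_Ico m N (by omega)
  have h3 := qP_mul_Ico m (2 * m + 1) (by omega)
  have h4 := qP_mul_qR N
  have h5 := qP_mul_qR (2 * m + 1)
  rw [← h2] at h4
  rw [← h3] at h5
  generalize gs _ _ = g at *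
  generalize (∏ i ∈ Finset.Ico (m + 1) (N + 1), (1 - (X : PS) ^ i)) = u at *
  generalize (∏ i ∈ Finset.Ico (m + 1) (2 * m + 1 + 1), (1 - (X : PS) ^ i)) = v at *
  calc g = g * (qP m * u * qR N) * (qP m * v * qR (2 * m + 1)) := by rw [h4, h5]; ring
    _ = (g * u * v) * (qP m ^ 2 * qR (2 * m + 1) * qR N) := by ring
    _ = _ := by rw [h1, one_mul]

/-- pairs in the set with smallest part of the first component equal to `m + 1` -/
def fib (n m : ℕ) : Set (Multiset ℕ × Multiset ℕ) :=
  {p | (∀ x ∈ p.1, m + 1 ≤ x) ∧ m + 1 ∈ p.1 ∧ (∀ x ∈ p.2, m + 1 ≤ x ∧ x < 2 * m + 2) ∧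
    p.1.sum + p.2.sum = n}

lemma fib_ncard (n m : ℕ) (h : m < n) : (fib n m).ncard =
    (pairSet (Finset.Ico (m + 1) (n + 1)) (Finset.Ico (m + 1) (2 * m + 1 + 1))
      (n - (m + 1))).ncard := by
  have hinj : Function.Injective (fun p : Multiset ℕ × Multiset ℕ => ((m + 1) ::ₘ p.1, p.2)) := by
    rintro ⟨p, q⟩ ⟨p', q'⟩ h
    simpa using h
  rw [← Set.ncard_image_of_injective (pairSet _ _ _) hinj]
  congr 1
  ext ⟨p, q⟩
  simp only [pairSet, fib, Set.mem_image, Set.mem_ofPred_eq, Prod.mk.injEq, Prod.exists,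
    Finset.mem_Ico]
  constructor
  · rintro ⟨h1, h2, h3, h4⟩
    obtain ⟨p', rfl⟩ := Multiset.exists_cons_of_mem h2
    refine ⟨p', q, ⟨fun x hx => ⟨h1 x (Multiset.mem_cons_of_mem hx), ?_⟩, fun x hx => ?_, ?_⟩,
      rfl, rfl⟩
    · have := Multiset.le_sum_of_mem (Multiset.mem_cons_of_mem (b := m + 1) hx)
      omega
    · have := h3 x hx
      omega
    · rw [Multiset.sum_cons] at h4
      omega
  · rintro ⟨p', q', ⟨h1, h2, h3⟩, rfl, rfl⟩
    refine ⟨fun x hx => ?_, Multiset.mem_cons_self _ _, fun x hx => ?_, ?_⟩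
    · rcases Multiset.mem_cons.mp hx with rfl | hx
      · exact le_rfl
      · exact (h1 x hx).1
    · have := h2 x hx
      omega
    · rw [Multiset.sum_cons]; omega

lemma fib_finite (n m : ℕ) : (fib n m).Finite := by
  refine (finite_pairs n).subset ?_
  rintro p ⟨h1, _, h2, h3⟩
  exact ⟨fun x hx => by have := h1 x hx; omega, fun x hx => by have := h2 x hx; omega, h3⟩

lemma le_sPart (π : Multiset ℕ) (b : ℕ∞) : b ≤ sPart π ↔ ∀ x ∈ π, b ≤ (x : ℕ∞) := by
  unfold sPart
  rw [Multiset.le_inf]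
  simp [bind, pure]

lemma sPart_eq (π : Multiset ℕ) (m : ℕ) (h : ∀ x ∈ π, m ≤ x) (hm : m ∈ π) :
    sPart π = (m : ℕ∞) := by
  apply le_antisymm
  · exact (le_sPart π _).mp le_rfl m hm
  · rw [le_sPart]
    intro x hx
    exact_mod_cast h x hx

lemma mem_fib (n m : ℕ) (p : Multiset ℕ × Multiset ℕ) (h1 : ∀ x ∈ p.1, m + 1 ≤ x)
    (h2 : m + 1 ∈ p.1) : (InST p ∧ p.1.sum + p.2.sum = n) ↔ p ∈ fib n m := by
  have hs := sPart_eq p.1 (m + 1) h1 h2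
  have e1 : ((m + 1 : ℕ) : ℕ∞) ≤ sPart p.2 ↔ ∀ x ∈ p.2, m + 1 ≤ x := by
    rw [le_sPart]
    exact forall₂_congr fun x _ => Nat.cast_le
  have e2 : (lPart p.2 : ℕ∞) < 2 * ((m + 1 : ℕ) : ℕ∞) ↔ ∀ x ∈ p.2, x < 2 * m + 2 := by
    have : (2 * ((m + 1 : ℕ) : ℕ∞)) = ((2 * m + 2 : ℕ) : ℕ∞) := by push_cast; ring
    rw [this, Nat.cast_lt, lPart, Nat.lt_succ_iff, Multiset.sup_le]
    exact forall₂_congr fun x _ => by omega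
  unfold InST fib
  rw [hs, e1, e2]
  simp only [Set.mem_ofPred_eq, IsPartition]
  constructor
  · rintro ⟨⟨_, _, _, h4, h5⟩, h6⟩
    exact ⟨h1, h2, fun x hx => ⟨h4 x hx, h5 x hx⟩, h6⟩
  · rintro ⟨_, _, h4, h6⟩
    refine ⟨⟨fun x hx => by have := h1 x hx; omega, fun x hx => by have := h4 x hx; omega, ?_,
      fun x hx => (h4 x hx).1, fun x hx => (h4 x hx).2⟩, h6⟩
    intro h0
    rw [h0] at h2
    simp at h2

lemma sT_eq (n : ℕ) : sT n = ∑ m ∈ Finset.range n, (fib n m).ncard := by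
  classical
  have hset : {p : Multiset ℕ × Multiset ℕ | InST p ∧ p.1.sum + p.2.sum = n} =
      ↑((Finset.range n).biUnion fun m => (fib_finite n m).toFinset) := by
    ext p
    simp only [Set.mem_ofPred_eq, Finset.coe_biUnion, Set.mem_iUnion, Set.Finite.coe_toFinset,
      Finset.coe_range, Set.mem_Iio, exists_prop]
    constructor
    · intro hp
      have hne : p.1.toFinset.Nonempty := by
        rw [Multiset.toFinset_nonempty]; exact hp.1.2.2.1
      have hmin : p.1.toFinset.min' hne ∈ p.1 :=
        Multiset.mem_toFinset.mp (Finset.min'_mem _ hne)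
      have hle : ∀ x ∈ p.1, p.1.toFinset.min' hne ≤ x := fun x hx =>
        Finset.min'_le _ _ (Multiset.mem_toFinset.mpr hx)
      have hpos := hp.1.1 _ hmin
      obtain ⟨m, hm⟩ := Nat.exists_eq_add_of_lt hpos
      rw [zero_add] at hm
      rw [hm] at hmin hle
      refine ⟨m, ?_, (mem_fib n m p hle hmin).mp hp⟩
      have := Multiset.le_sum_of_mem hmin
      omega
    · rintro ⟨m, _, hp⟩
      exact (mem_fib n m p hp.1 hp.2.1).mpr hp
  unfold sT
  rw [hset, Set.ncard_coe_finset, Finset.card_biUnion]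
  · exact Finset.sum_congr rfl fun m _ => (Set.ncard_eq_toFinset_card _ _).symm
  · intro a _ b _ hab
    rw [Function.onFun, Finset.disjoint_left]
    intro p hp hq
    rw [Set.Finite.mem_toFinset] at hp hq
    have := hp.1 _ hq.2.1
    have := hq.1 _ hp.2.1
    omega

lemma sT_coeff (n : ℕ) : (sT n : ZMod 3) = coeff n (Phi n) := by
  rw [sT_eq, Phi, map_sum, Nat.cast_sum]
  refine Finset.sum_congr rfl fun m hm => ?_
  rw [Finset.mem_range] at hm
  rw [coeff_X_pow_mul', if_pos (by omega), ← gs_eq m n hm, fib_ncard n m hm, gs, coeff_mk]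

theorem sT_three_n_plus_two_mod_three (n : ℕ) : 3 ∣ sT (3 * n + 2) := by
  rw [← ZMod.natCast_eq_zero_iff, sT_coeff]
  exact Phi_good _ _ le_rfl (by omega)
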